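/- arXiv:1607.05132 — 2 statements merged into one kernel-verified Lean document; each statement's English description precedes it below -/
import Mathlib

section
/- Let n ≥ 2 and let c ≥ 1 be a real number. Set x = 1 + 3(c+1)·ln n, and for each 1 ≤ i ≤ ⌈log₂ n⌉ set h_i = 2^i and let C_i be a random subset of an n-element set obtained by including each element independently with probability min(x/h_i, 1). Then with probability at least 1 − 1/n^c, it holds simultaneously for all 1 ≤ i ≤ ⌈log₂ n⌉ that |C_i| ≤ 3·x·n/h_i. -/
open MeasureTheory

/-- The Bernoulli measure on `Bool` with success probability `p`. -/
noncomputable def bern (p : ℝ) : Measure Bool :=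
  (ENNReal.ofReal p) • Measure.dirac true + (ENNReal.ofReal (1 - p)) • Measure.dirac false

/-!
With `E|C| = ∑ p_a`, Bernoulli variables satisfy `E[exp (t |C|)] ≤ exp (E|C| (exp t - 1))`, so
Chernoff's method at `t = 1` and `e ≤ 3` give `P(|C| ≥ 3m) ≤ exp (-m)` for every `m ≥ E|C|`.
Since `h_i = 2^i ≤ 2n`, the choice `m = n x / h_i ≥ x / 2 ≥ (c + 1) log n` makes each level fail
with probability at most `n^{-(c+1)}`, and there are at most `n` levels.
-/

section

open Finset ProbabilityTheory Real

lemma pow_le_mul_of_le_clog {b i n : ℕ} (hi : 1 ≤ i) (hin : i ≤ Nat.clog b n) :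
    b ^ i ≤ b * n := by
  obtain ⟨j, rfl⟩ := Nat.exists_eq_add_of_le' hi
  rw [pow_succ']
  exact Nat.mul_le_mul_left b (Nat.pow_lt_of_lt_clog hin).le

lemma one_sub_card_mul_le_measureReal_forall {Ω ι : Type*} [MeasurableSpace Ω]
    {μ : Measure Ω} [IsProbabilityMeasure μ] (s : Finset ι) {P : ι → Ω → Prop} {ε : ℝ}
    (hP : ∀ i ∈ s, μ.real {ω | ¬ P i ω} ≤ ε) :
    1 - #s * ε ≤ μ.real {ω | ∀ i ∈ s, P i ω} := by
  have compl_eq : {ω | ∀ i ∈ s, P i ω}ᶜ = ⋃ i ∈ s, {ω | ¬ P i ω} := by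
    ext ω
    simp
  have compl_le : μ.real {ω | ∀ i ∈ s, P i ω}ᶜ ≤ #s * ε := by
    rw [compl_eq, ← nsmul_eq_mul]
    exact (measureReal_biUnion_finset_le _ _).trans (sum_le_card_nsmul s _ ε hP)
  have one_le := measureReal_union_le (μ := μ) {ω | ∀ i ∈ s, P i ω} {ω | ∀ i ∈ s, P i ω}ᶜ
  rw [Set.union_compl_self, probReal_univ] at one_le
  linarith

lemma isProbabilityMeasure_bern {p : ℝ} (hp₀ : 0 ≤ p) (hp₁ : p ≤ 1) :
    IsProbabilityMeasure (bern p) where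
  measure_univ := by
    simp [bern, ← ENNReal.ofReal_add hp₀ (sub_nonneg.2 hp₁)]

lemma integral_bern {p : ℝ} (hp₀ : 0 ≤ p) (hp₁ : p ≤ 1) (g : Bool → ℝ) :
    ∫ b, g b ∂bern p = p * g true + (1 - p) * g false := by
  rw [bern, integral_add_measure (.smul_measure .of_finite ENNReal.ofReal_ne_top)
    (.smul_measure .of_finite ENNReal.ofReal_ne_top)]
  simp [integral_smul_measure, hp₀, hp₁]

lemma mgf_indicator_bern {p : ℝ} (hp₀ : 0 ≤ p) (hp₁ : p ≤ 1) (t : ℝ) :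
    mgf (fun b : Bool => if b then 1 else 0) (bern p) t = 1 + p * (exp t - 1) := by
  rw [mgf, integral_bern hp₀ hp₁]
  simp only [if_true, Bool.false_eq_true, if_false, mul_one, mul_zero, exp_zero]
  ring

section RandomSubset

variable {α : Type*} [Fintype α]

lemma mgf_card_pi_bern {p : α → ℝ} (hp₀ : ∀ a, 0 ≤ p a) (hp₁ : ∀ a, p a ≤ 1) (t : ℝ) :
    mgf (fun f : α → Bool => (#{a | f a} : ℝ)) (Measure.pi fun a => bern (p a)) t =
      ∏ a, (1 + p a * (exp t - 1)) := by
  have (a : α) : IsProbabilityMeasure (bern (p a)) := isProbabilityMeasure_bern (hp₀ a) (hp₁ a)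
  have exp_card (f : α → Bool) :
      exp (t * #{a | f a}) = ∏ a, exp (t * if f a then 1 else 0) := by
    rw [natCast_card_filter, mul_sum, exp_sum]
  simp only [mgf, exp_card]
  rw [integral_fintype_prod_eq_prod (fun _ (b : Bool) => exp (t * if b then 1 else 0))]
  exact prod_congr rfl fun a _ => mgf_indicator_bern (hp₀ a) (hp₁ a) t

lemma mgf_card_pi_bern_le {p : α → ℝ} (hp₀ : ∀ a, 0 ≤ p a) (hp₁ : ∀ a, p a ≤ 1) (t : ℝ) :
    mgf (fun f : α → Bool => (#{a | f a} : ℝ)) (Measure.pi fun a => bern (p a)) t ≤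
      exp ((∑ a, p a) * (exp t - 1)) := by
  rw [mgf_card_pi_bern hp₀ hp₁, sum_mul, exp_sum]
  refine prod_le_prod (fun a _ => ?_) fun a _ => by
    simpa only [add_comm] using add_one_le_exp (p a * (exp t - 1))
  linarith [hp₁ a, mul_nonneg (hp₀ a) (exp_pos t).le]

lemma pi_bern_real_le_card_le_exp {p : α → ℝ} (hp₀ : ∀ a, 0 ≤ p a) (hp₁ : ∀ a, p a ≤ 1)
    (s : ℝ) {t : ℝ} (ht : 0 ≤ t) :
    (Measure.pi fun a => bern (p a)).real {f | s ≤ #{a | f a}} ≤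
      exp ((∑ a, p a) * (exp t - 1) - t * s) := by
  have (a : α) : IsProbabilityMeasure (bern (p a)) := isProbabilityMeasure_bern (hp₀ a) (hp₁ a)
  calc (Measure.pi fun a => bern (p a)).real {f | s ≤ #{a | f a}}
      ≤ exp (-t * s) * mgf (fun f => (#{a | f a} : ℝ)) (Measure.pi fun a => bern (p a)) t :=
        measure_ge_le_exp_mul_mgf s ht .of_finite
    _ ≤ exp (-t * s) * exp ((∑ a, p a) * (exp t - 1)) := by
        gcongr
        exact mgf_card_pi_bern_le hp₀ hp₁ t
    _ = exp ((∑ a, p a) * (exp t - 1) - t * s) := by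
        rw [← exp_add]
        ring_nf

lemma pi_bern_real_three_mul_le_card_le_exp_neg {p : α → ℝ} {m : ℝ} (hp₀ : ∀ a, 0 ≤ p a)
    (hp₁ : ∀ a, p a ≤ 1) (hm : ∑ a, p a ≤ m) :
    (Measure.pi fun a => bern (p a)).real {f | 3 * m ≤ #{a | f a}} ≤ exp (-m) := by
  refine (pi_bern_real_le_card_le_exp hp₀ hp₁ (3 * m) zero_le_one).trans (exp_le_exp.2 ?_)
  have mean_nonneg : 0 ≤ ∑ a, p a := sum_nonneg fun a _ => hp₀ a
  have exponent_le : (∑ a, p a) * (exp 1 - 1) ≤ m * 2 := by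
    have exp_one_sub_one_le : exp 1 - 1 ≤ 2 := by linarith [exp_one_lt_three]
    exact mul_le_mul hm exp_one_sub_one_le (by simp) (mean_nonneg.trans hm)
  linarith

variable {Ω : Type*} [MeasurableSpace Ω] {μ : Measure Ω}

lemma measureReal_lt_card_le_rpow_neg [Nonempty α] {Y : Ω → α → Bool} {b h x : ℝ} (hb : 0 ≤ b)
    (hh₀ : 0 < h) (hh : h ≤ 2 * Fintype.card α) (hx : 2 * b * log (Fintype.card α) ≤ x)
    (hY : HasLaw Y (Measure.pi fun _ => bern (min (x / h) 1)) μ) :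
    μ.real {ω | 3 * x * Fintype.card α / h < #{a | Y ω a}} ≤ (Fintype.card α : ℝ) ^ (-b) := by
  set n := Fintype.card α
  have n_pos : (0 : ℝ) < n := Nat.cast_pos.2 Fintype.card_pos
  have x_nonneg : 0 ≤ x := le_trans (by positivity) hx
  have p_nonneg : 0 ≤ min (x / h) 1 := le_min (by positivity) zero_le_one
  have : IsProbabilityMeasure (bern (min (x / h) 1)) :=
    isProbabilityMeasure_bern p_nonneg (min_le_right _ _)
  have : IsProbabilityMeasure μ := hY.isProbabilityMeasure
  have mean_le : ∑ _a : α, min (x / h) 1 ≤ n * (x / h) := by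
    rw [sum_const, card_univ, nsmul_eq_mul]
    gcongr
    exact min_le_left _ _
  have exponent_ge : b * log n ≤ n * (x / h) := by
    rw [← mul_div_assoc, le_div_iff₀ hh₀]
    calc b * log n * h ≤ b * log n * (2 * n) := by gcongr
      _ = n * (2 * b * log n) := by ring
      _ ≤ n * x := by gcongr
  have threshold_eq : 3 * (n * (x / h)) = 3 * x * n / h := by ring
  calc μ.real {ω | 3 * x * n / h < #{a | Y ω a}}
      ≤ μ.real {ω | 3 * (n * (x / h)) ≤ #{a | Y ω a}} :=
        measureReal_mono <| Set.ofPred_subset_ofPred.2 fun _ hω => threshold_eq.trans_le hω.le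
    _ = (Measure.pi fun _ : α => bern (min (x / h) 1)).real {f | 3 * (n * (x / h)) ≤ #{a | f a}} :=
        hY.measureReal_eq (p := fun f => 3 * (n * (x / h)) ≤ #{a | f a})
          (Set.toFinite _).measurableSet
    _ ≤ exp (-(n * (x / h))) :=
        pi_bern_real_three_mul_le_card_le_exp_neg (fun _ => p_nonneg)
          (fun _ => min_le_right _ _) mean_le
    _ ≤ exp (log n * -b) := exp_le_exp.2 (by linarith)
    _ = (n : ℝ) ^ (-b) := (rpow_def_of_pos n_pos _).symm

theorem stmt4_general [Nonempty α] [IsProbabilityMeasure μ] {c x : ℝ}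
    (hx : 2 * (c + 1) * log (Fintype.card α) ≤ x) {X : ℕ → Ω → α → Bool}
    (hX : ∀ i, 1 ≤ i → i ≤ Nat.clog 2 (Fintype.card α) →
      HasLaw (X i) (Measure.pi fun _ => bern (min (x / 2 ^ i) 1)) μ) :
    1 - 1 / (Fintype.card α : ℝ) ^ c ≤
      μ.real {ω | ∀ i, 1 ≤ i → i ≤ Nat.clog 2 (Fintype.card α) →
        (#{a | X i ω a} : ℝ) ≤ 3 * x * Fintype.card α / 2 ^ i} := by
  set n := Fintype.card α
  have one_le_n : (1 : ℝ) ≤ n := Nat.one_le_cast.2 Fintype.card_pos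
  have n_pos : (0 : ℝ) < n := by linarith
  rw [one_div, ← rpow_neg n_pos.le]
  rcases lt_or_ge c 0 with hc | hc
  · exact (sub_nonpos.2 (one_le_rpow one_le_n (by linarith))).trans measureReal_nonneg
  have level_failure (i : ℕ) (hi : i ∈ Icc 1 (Nat.clog 2 n)) :
      μ.real {ω | ¬ (#{a | X i ω a} : ℝ) ≤ 3 * x * n / 2 ^ i} ≤ (n : ℝ) ^ (-(c + 1)) := by
    obtain ⟨hi₁, hi₂⟩ := mem_Icc.1 hi
    simp only [not_le]
    exact measureReal_lt_card_le_rpow_neg (by linarith) (by positivity)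
      (mod_cast pow_le_mul_of_le_clog hi₁ hi₂) hx (hX i hi₁ hi₂)
  have total_failure : #(Icc 1 (Nat.clog 2 n)) * (n : ℝ) ^ (-(c + 1)) ≤ (n : ℝ) ^ (-c) := by
    have clog_le : Nat.clog 2 n ≤ n := Nat.clog_le_of_le_pow Nat.lt_two_pow_self.le
    calc #(Icc 1 (Nat.clog 2 n)) * (n : ℝ) ^ (-(c + 1))
        ≤ n * (n : ℝ) ^ (-(c + 1)) := by
          rw [Nat.card_Icc, Nat.add_sub_cancel]
          gcongr
      _ = (n : ℝ) ^ (-c) := by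
          rw [neg_add', rpow_sub_one n_pos.ne', mul_div_cancel₀ _ n_pos.ne']
  simpa only [mem_Icc, and_imp] using (sub_le_sub_left total_failure 1).trans
    (one_sub_card_mul_le_measureReal_forall _ level_failure)

end RandomSubset

end

/-- Let `x = 1 + 3(c+1) ln n` and, for `1 ≤ i ≤ ⌈log₂ n⌉`, let `C_i` be a
random subset of an `n`-element set obtained by including each element independently with
probability `min (x / 2^i) 1` (no independence between different `i` assumed).  Then with
probability at least `1 - 1/n^c`, simultaneously for all `1 ≤ i ≤ ⌈log₂ n⌉` we have
`|C_i| ≤ 3 x n / 2^i`. -/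
theorem stmt4 {α : Type} [Fintype α] [DecidableEq α]
    {Ω : Type} [MeasurableSpace Ω] (μ : Measure Ω) [IsProbabilityMeasure μ]
    (n : ℕ) (hn : 2 ≤ n) (hcard : Fintype.card α = n)
    (c x : ℝ) (hc : 1 ≤ c) (hx : x = 1 + 3 * (c + 1) * Real.log (n : ℝ))
    -- `X i` is the indicator family of the random subset `C_i`
    (X : ℕ → Ω → (α → Bool)) (hXm : ∀ i, Measurable (X i))
    -- each `C_i` is distributed as the product of independent Bernoulli(min (x/2^i) 1)
    (hX : ∀ i : ℕ, 1 ≤ i → i ≤ Nat.clog 2 n →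
      Measure.map (X i) μ = Measure.pi fun _ : α => bern (min (x / (2 : ℝ) ^ i) 1)) :
    ENNReal.ofReal (1 - 1 / (n : ℝ) ^ c) ≤
      μ {ω : Ω | ∀ i : ℕ, 1 ≤ i → i ≤ Nat.clog 2 n →
          ((Finset.univ.filter fun a : α => X i ω a = true).card : ℝ) ≤
            3 * x * (n : ℝ) / (2 : ℝ) ^ i} := by
  subst hcard
  have : Nonempty α := Fintype.card_pos_iff.1 (by omega)
  have log_nonneg : 0 ≤ Real.log (Fintype.card α) := Real.log_natCast_nonneg _
  exact ENNReal.ofReal_le_of_le_toReal <| stmt4_general (by rw [hx]; nlinarith)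
    fun i hi hin => ⟨(hXm i).aemeasurable, hX i hi hin⟩
end

section
/- Let G = (V, E) be a finite directed graph with real edge weights w. There exists a potential function for G, i.e., a function p : V → ℝ such that w(u, v) + p(u) − p(v) ≥ 0 for every edge (u, v) ∈ E, if and only if G contains no cycle of negative total weight. -/
/-- `IsWalk E l s t`: the nonempty list `l` is the node sequence of a walk from `s` to `t`
in the directed graph with edge relation `E`. -/
def IsWalk {V : Type*} (E : V → V → Prop) (l : List V) (s t : V) : Prop :=
  l ≠ [] ∧ l.head? = some s ∧ l.getLast? = some t ∧ l.Chain' E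

/-- The length (total weight) of a walk with node sequence `l` under edge weights `w`. -/
def walkLen {V : Type*} (w : V → V → ℝ) (l : List V) : ℝ :=
  ((l.zip l.tail).map fun e => w e.1 e.2).sum

/-!
If `p` is a potential, then a walk from `s` to `t` has length at least `p t - p s` by telescoping,
which is zero for a cycle. Conversely, if no cycle is negative, cutting the cycles out of a walk
does not increase its length. A finite graph has finitely many walks without repeated nodes, so the
lengths of all walks starting at `s` have a finite infimum `d s`. Prefixing a walk from `z` with the
edge `(u, z)` shows `d u ≤ w u z + d z`, so `-d` is a potential.
-/

section Walk

variable {V : Type*} {E : V → V → Prop} {l : List V} {a b s t x : V}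

theorem isWalk_iff :
    IsWalk E l s t ↔ l.head? = some s ∧ l.getLast? = some t ∧ l.IsChain E :=
  ⟨And.right, fun h => ⟨by rintro rfl; simp at h, h⟩⟩

theorem isWalk_singleton (E : V → V → Prop) (s : V) : IsWalk E [s] s s :=
  isWalk_iff.2 ⟨rfl, rfl, List.isChain_singleton s⟩

theorem isWalk_cons_cons :
    IsWalk E (a :: b :: l) s t ↔ a = s ∧ E a b ∧ IsWalk E (b :: l) b t := by
  simp only [isWalk_iff, List.head?_cons, Option.some.injEq, List.getLast?_cons_cons,
    List.isChain_cons_cons]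
  tauto

theorem IsWalk.exists_eq_cons (h : IsWalk E l s t) : ∃ l', l = s :: l' :=
  List.head?_eq_some_iff.1 h.2.1

theorem IsWalk.cons (hab : E a b) (h : IsWalk E l b t) : IsWalk E (a :: l) a t := by
  obtain ⟨l, rfl⟩ := h.exists_eq_cons
  exact isWalk_cons_cons.2 ⟨rfl, hab, h⟩

@[elab_as_elim]
theorem IsWalk.induction {motive : ∀ l s, IsWalk E l s t → Prop}
    (singleton : motive [t] t (isWalk_singleton E t))
    (cons : ∀ {a b l} (hab : E a b) (hl : IsWalk E l b t),
      motive l b hl → motive (a :: l) a (hl.cons hab))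
    (h : IsWalk E l s t) : motive l s h := by
  induction l generalizing s with
  | nil => exact absurd rfl h.1
  | cons a l ih =>
    cases l with
    | nil =>
      obtain ⟨-, hs, ht, -⟩ := h
      obtain rfl : a = s := Option.some.inj hs
      obtain rfl : a = t := Option.some.inj ht
      exact singleton
    | cons b l =>
      obtain ⟨rfl, hab, hl⟩ := isWalk_cons_cons.1 h
      exact cons hab hl (ih hl)

theorem isWalk_append_cons {l₁ l₂ : List V} :
    IsWalk E (l₁ ++ x :: l₂) s t ↔ IsWalk E (l₁ ++ [x]) s x ∧ IsWalk E (x :: l₂) x t := by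
  have hhead : (l₁ ++ x :: l₂).head? = (l₁ ++ [x]).head? := by cases l₁ <;> rfl
  have hlast : (l₁ ++ x :: l₂).getLast? = (x :: l₂).getLast? :=
    List.getLast?_append_of_ne_nil l₁ (List.cons_ne_nil x l₂)
  have hchain : (l₁ ++ x :: l₂).IsChain E ↔ (l₁ ++ [x]).IsChain E ∧ (x :: l₂).IsChain E :=
    List.isChain_split
  simp only [isWalk_iff, hhead, hlast, hchain, List.getLast?_concat, List.head?_cons]
  tauto

theorem walkLen_singleton (w : V → V → ℝ) (a : V) : walkLen w [a] = 0 := by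
  simp [walkLen]

theorem walkLen_cons_cons (w : V → V → ℝ) (a b : V) (l : List V) :
    walkLen w (a :: b :: l) = w a b + walkLen w (b :: l) := by
  simp [walkLen]

theorem IsWalk.walkLen_cons (h : IsWalk E l s t) (w : V → V → ℝ) (a : V) :
    walkLen w (a :: l) = w a s + walkLen w l := by
  obtain ⟨l, rfl⟩ := h.exists_eq_cons
  exact walkLen_cons_cons w a s l

theorem walkLen_append_cons (w : V → V → ℝ) (l₁ : List V) (x : V) (l₂ : List V) :
    walkLen w (l₁ ++ x :: l₂) = walkLen w (l₁ ++ [x]) + walkLen w (x :: l₂) := by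
  induction l₁ with
  | nil => simp [walkLen_singleton]
  | cons a l₁ ih =>
    cases l₁ with
    | nil => simp [walkLen_cons_cons, walkLen_singleton]
    | cons b l₁ =>
      simp only [List.cons_append, walkLen_cons_cons] at ih ⊢
      rw [ih, add_assoc]

end Walk

section Potential

variable {V : Type*} {E : V → V → Prop} {w : V → V → ℝ} {l : List V} {s t : V}

/-- `p` is a potential function for the graph `E` with weights `w`: adding `p u - p z` to the weight
of each edge `(u, z)` makes all edge weights nonnegative. -/
def IsPotential (E : V → V → Prop) (w : V → V → ℝ) (p : V → ℝ) : Prop :=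
  ∀ u z, E u z → 0 ≤ w u z + p u - p z

/-- No cycle of the graph `E` has negative total weight. A cycle is a closed walk with at least one
edge, so its node sequence, which lists the base point at both ends, has length at least two. -/
def NonnegCycles (E : V → V → Prop) (w : V → V → ℝ) : Prop :=
  ∀ (l : List V) (s : V), IsWalk E l s s → 2 ≤ l.length → 0 ≤ walkLen w l

/-- The set of lengths of the walks starting at `s`, with arbitrary endpoint. The negative of its
infimum serves as the potential of `s`. -/
def walkLensFrom (E : V → V → Prop) (w : V → V → ℝ) (s : V) : Set ℝ :=
  {r | ∃ l t, IsWalk E l s t ∧ walkLen w l = r}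

theorem IsPotential.sub_le_walkLen {p : V → ℝ} (hp : IsPotential E w p) (h : IsWalk E l s t) :
    p t - p s ≤ walkLen w l := by
  induction h using IsWalk.induction with
  | singleton => rw [walkLen_singleton, sub_self]
  | @cons a b l hab hl ih =>
    have hedge := hp a b hab
    rw [hl.walkLen_cons]
    linarith

theorem IsPotential.nonnegCycles {p : V → ℝ} (hp : IsPotential E w p) : NonnegCycles E w :=
  fun _ s h _ => (sub_self (p s)).symm.trans_le (hp.sub_le_walkLen h)

theorem NonnegCycles.exists_nodup_walkLen_le (hc : NonnegCycles E w) (h : IsWalk E l s t) :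
    ∃ l', IsWalk E l' s t ∧ l'.Nodup ∧ walkLen w l' ≤ walkLen w l := by
  induction h using IsWalk.induction with
  | singleton => exact ⟨[t], isWalk_singleton E t, List.nodup_singleton t, le_rfl⟩
  | @cons a b l hab hl ih =>
    obtain ⟨l', hl', hnodup, hle⟩ := ih
    have hcons : IsWalk E (a :: l') a t := hl'.cons hab
    have hcons_le : walkLen w (a :: l') ≤ walkLen w (a :: l) := by
      rw [hl'.walkLen_cons, hl.walkLen_cons]
      gcongr
    by_cases ha : a ∈ l'
    · obtain ⟨l₁, l₂, rfl⟩ := List.append_of_mem ha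
      obtain ⟨hcycle, hrest⟩ := isWalk_append_cons (l₁ := a :: l₁).1 hcons
      have hcycle_nonneg : 0 ≤ walkLen w (a :: l₁ ++ [a]) := hc _ a hcycle (by simp)
      refine ⟨a :: l₂, hrest, hnodup.of_append_right, ?_⟩
      calc walkLen w (a :: l₂)
          ≤ walkLen w (a :: l₁ ++ [a]) + walkLen w (a :: l₂) := le_add_of_nonneg_left hcycle_nonneg
        _ = walkLen w (a :: (l₁ ++ a :: l₂)) := (walkLen_append_cons w (a :: l₁) a l₂).symm
        _ ≤ walkLen w (a :: l) := hcons_le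
    · exact ⟨a :: l', hcons, hnodup.cons ha, hcons_le⟩

theorem finite_setOf_nodup (V : Type*) [Finite V] : {l : List V | l.Nodup}.Finite := by
  classical
  have := Fintype.ofFinite V
  exact Set.finite_coe_iff.1 (inferInstanceAs (Finite {l : List V // l.Nodup}))

theorem NonnegCycles.bddBelow_walkLensFrom [Finite V] (hc : NonnegCycles E w) (s : V) :
    BddBelow (walkLensFrom E w s) := by
  obtain ⟨m, hm⟩ := ((finite_setOf_nodup V).image (walkLen w)).bddBelow
  refine ⟨m, ?_⟩
  rintro _ ⟨l, t, hl, rfl⟩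
  obtain ⟨l', -, hnodup, hle⟩ := hc.exists_nodup_walkLen_le hl
  exact (hm (Set.mem_image_of_mem _ hnodup)).trans hle

theorem isPotential_neg_sInf_walkLensFrom (hbdd : ∀ s, BddBelow (walkLensFrom E w s)) :
    IsPotential E w fun s => -sInf (walkLensFrom E w s) := by
  intro u z huz
  have hne : (walkLensFrom E w z).Nonempty := ⟨_, [z], z, isWalk_singleton E z, rfl⟩
  have hinf : sInf (walkLensFrom E w u) - w u z ≤ sInf (walkLensFrom E w z) := by
    refine le_csInf hne ?_
    rintro _ ⟨l, t, hl, rfl⟩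
    rw [sub_le_iff_le_add', ← hl.walkLen_cons]
    exact csInf_le (hbdd u) ⟨u :: l, t, hl.cons huz, rfl⟩
  linarith

end Potential

/-- A finite directed graph with real edge weights admits a potential
function (`p` with `w u v + p u - p v ≥ 0` on every edge) if and only if it contains no
cycle of negative total weight. -/
theorem stmt7 {V : Type} [Fintype V]
    (E : V → V → Prop) (w : V → V → ℝ) :
    (∃ p : V → ℝ, ∀ u z, E u z → 0 ≤ w u z + p u - p z) ↔
    (∀ (l : List V) (s : V), IsWalk E l s s → 2 ≤ l.length → 0 ≤ walkLen w l) := by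
  constructor
  · rintro ⟨p, hp⟩
    exact IsPotential.nonnegCycles hp
  · intro hc
    have hbdd : ∀ s, BddBelow (walkLensFrom E w s) := NonnegCycles.bddBelow_walkLensFrom hc
    exact ⟨_, isPotential_neg_sInf_walkLensFrom hbdd⟩
end
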